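/- The cyclic left A(1)-module A(1)/(Sq³) (quotient by the left ideal generated by Sq³ = Sq¹Sq²) is 5-dimensional over F₂, with one basis element in each of the degrees 0, 1, 2, 3, 4. -/

import Mathlib

noncomputable section

/-- Relations defining A(1): (Sq¹)² = 0, Sq²Sq² = Sq¹Sq²Sq¹, Sq²Sq¹Sq²Sq¹ = Sq¹Sq²Sq¹Sq². -/
inductive A1Rel : FreeAlgebra (ZMod 2) (Fin 2) → FreeAlgebra (ZMod 2) (Fin 2) → Prop
  | sq1_sq1 : A1Rel (FreeAlgebra.ι (ZMod 2) (0 : Fin 2) * FreeAlgebra.ι (ZMod 2) 0) 0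
  | adem : A1Rel (FreeAlgebra.ι (ZMod 2) (1 : Fin 2) * FreeAlgebra.ι (ZMod 2) 1)
      (FreeAlgebra.ι (ZMod 2) (0 : Fin 2) * FreeAlgebra.ι (ZMod 2) 1 * FreeAlgebra.ι (ZMod 2) 0)
  | top : A1Rel
      (FreeAlgebra.ι (ZMod 2) (1 : Fin 2) * FreeAlgebra.ι (ZMod 2) 0 *
        FreeAlgebra.ι (ZMod 2) 1 * FreeAlgebra.ι (ZMod 2) 0)
      (FreeAlgebra.ι (ZMod 2) (0 : Fin 2) * FreeAlgebra.ι (ZMod 2) 1 *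
        FreeAlgebra.ι (ZMod 2) 0 * FreeAlgebra.ι (ZMod 2) 1)

/-- The algebra A(1), subalgebra of the mod-2 Steenrod algebra generated by Sq¹, Sq². -/
abbrev A1 := RingQuot A1Rel

def Sq1 : A1 := RingQuot.mkAlgHom (ZMod 2) A1Rel (FreeAlgebra.ι (ZMod 2) 0)
def Sq2 : A1 := RingQuot.mkAlgHom (ZMod 2) A1Rel (FreeAlgebra.ι (ZMod 2) 1)
def Sq3 : A1 := Sq1 * Sq2

/-- Generators, for building monomial words. -/
def A1gen : Fin 2 → A1
  | 0 => Sq1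
  | 1 => Sq2

/-- Weight of a word: Sq¹ has degree 1, Sq² has degree 2. -/
def A1wt (l : List (Fin 2)) : ℕ := (l.map fun i => (i : ℕ) + 1).sum

/-- The product of a word of generators. -/
def A1word (l : List (Fin 2)) : A1 := (l.map A1gen).prod

/-- The degree-`n` graded component of A(1): the F₂-span of monomials of weight `n`. -/
def A1deg (n : ℕ) : Submodule (ZMod 2) A1 :=
  Submodule.span (ZMod 2) {x | ∃ l, A1wt l = n ∧ x = A1word l}

/-- The degree-`n` component of a cyclic module A(1)/I. -/
def A1qdeg (I : Submodule A1 A1) (n : ℕ) : Submodule (ZMod 2) (A1 ⧸ I) :=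
  Submodule.map (I.mkQ.restrictScalars (ZMod 2)) (A1deg n)

/-!
Let `g` be the class of `1` in A(1)/(Sq³). The relations of A(1), together with `Sq³ g = 0`, show
that Sq¹ and Sq² send each of the five elements

  `e₀ = g`, `e₁ = Sq¹ g`, `e₂ = Sq² g`, `e₃ = Sq² Sq¹ g`, `e₄ = Sq¹ Sq² Sq¹ g`

to another one or to zero. Hence the degree-`n` component is spanned by `eₙ` for `n ≤ 4` and is zero
for `n ≥ 5`. Conversely, this action table defines a representation of A(1) on `F₂⁵` in which Sq³
kills the first basis vector; acting on that vector induces a map from A(1)/(Sq³) to `F₂⁵` sending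
the `eₙ` to the standard basis, so they are linearly independent.
-/

section CyclicLift

variable {F A V : Type*} [CommRing F] [Ring A] [Algebra F A] [AddCommGroup V] [Module F V]
  (ρ : A →ₐ[F] Module.End F V) {a : A} {v : V}

/-- The linear map `x ↦ ρ x v` on the cyclic left module `A/(a)`, for a representation `ρ` and a
vector `v` killed by `a`. -/
def cyclicLift (h : ρ a v = 0) : (A ⧸ Submodule.span A {a}) →ₗ[F] V :=
  Submodule.liftQ ((Submodule.span A {a}).restrictScalars F)
      (LinearMap.applyₗ v ∘ₗ ρ.toLinearMap) (by
        intro x hx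
        obtain ⟨y, rfl⟩ := Submodule.mem_span_singleton.1 hx
        simp [h]) ∘ₗ
    (Submodule.Quotient.restrictScalarsEquiv F (Submodule.span A {a})).symm.toLinearMap

@[simp]
theorem cyclicLift_mk (h : ρ a v = 0) (x : A) :
    cyclicLift ρ h (Submodule.Quotient.mk x) = ρ x v :=
  rfl

@[simp]
theorem cyclicLift_smul (h : ρ a v = 0) (x : A) (q : A ⧸ Submodule.span A {a}) :
    cyclicLift ρ h (x • q) = ρ x (cyclicLift ρ h q) := by
  obtain ⟨y, rfl⟩ := Submodule.Quotient.mk_surjective _ q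
  rw [← Submodule.Quotient.mk_smul, cyclicLift_mk, cyclicLift_mk, smul_eq_mul, map_mul,
    Module.End.mul_apply]

end CyclicLift

theorem Sq1_mul_Sq1 : Sq1 * Sq1 = 0 := by
  simpa only [Sq1, map_mul, map_zero] using RingQuot.mkAlgHom_rel (ZMod 2) A1Rel.sq1_sq1

theorem Sq2_mul_Sq2 : Sq2 * Sq2 = Sq1 * Sq2 * Sq1 := by
  simpa only [Sq1, Sq2, map_mul] using RingQuot.mkAlgHom_rel (ZMod 2) A1Rel.adem

theorem Sq2_mul_Sq1_mul_Sq2_mul_Sq1 : Sq2 * Sq1 * Sq2 * Sq1 = Sq1 * Sq2 * Sq1 * Sq2 := by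
  simpa only [Sq1, Sq2, map_mul] using RingQuot.mkAlgHom_rel (ZMod 2) A1Rel.top

section Lift

variable {B : Type*} [Semiring B] [Algebra (ZMod 2) B]

/-- The universal property of A(1): two elements of an F₂-algebra satisfying the defining relations
are the images of Sq¹ and Sq² under an algebra homomorphism. -/
def A1.lift (a b : B) (haa : a * a = 0) (hbb : b * b = a * b * a)
    (hbaba : b * a * b * a = a * b * a * b) : A1 →ₐ[ZMod 2] B :=
  RingQuot.liftAlgHom (ZMod 2) ⟨FreeAlgebra.lift (ZMod 2) ![a, b], by
    rintro _ _ (_ | _ | _) <;> simpa [FreeAlgebra.lift_ι_apply]⟩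

variable {a b : B} (haa : a * a = 0) (hbb : b * b = a * b * a)
  (hbaba : b * a * b * a = a * b * a * b)

@[simp]
theorem A1.lift_Sq1 : A1.lift a b haa hbb hbaba Sq1 = a := by
  simp [A1.lift, Sq1]

@[simp]
theorem A1.lift_Sq2 : A1.lift a b haa hbb hbaba Sq2 = b := by
  simp [A1.lift, Sq2]

end Lift

section Degree

theorem A1wt_cons (i : Fin 2) (l : List (Fin 2)) : A1wt (i :: l) = A1wt l + (i + 1) := by
  simp [A1wt, add_comm]

theorem A1word_cons (i : Fin 2) (l : List (Fin 2)) : A1word (i :: l) = A1gen i * A1word l := by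
  simp [A1word]

theorem adjoin_range_A1gen : Algebra.adjoin (ZMod 2) (Set.range A1gen) = ⊤ := by
  have hgen : A1gen = RingQuot.mkAlgHom (ZMod 2) A1Rel ∘ FreeAlgebra.ι (ZMod 2) := by
    ext i; fin_cases i <;> rfl
  rw [hgen, Set.range_comp, ← AlgHom.map_adjoin, FreeAlgebra.adjoin_range_ι, Algebra.map_top,
    AlgHom.range_eq_top]
  exact RingQuot.mkAlgHom_surjective (ZMod 2) A1Rel

theorem iSup_A1deg : ⨆ n, A1deg n = ⊤ := by
  rw [eq_top_iff, ← Algebra.top_toSubmodule, ← adjoin_range_A1gen, Algebra.adjoin_eq_span,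
    Submodule.span_le, ← FreeMonoid.mrange_lift]
  rintro _ ⟨l, rfl⟩
  exact Submodule.mem_iSup_of_mem _
    (Submodule.subset_span ⟨l.toList, rfl, FreeMonoid.lift_apply ..⟩)

variable {I : Submodule A1 A1}

theorem iSup_A1qdeg : ⨆ n, A1qdeg I n = ⊤ := by
  simp only [A1qdeg]
  rw [← Submodule.map_iSup, iSup_A1deg, Submodule.map_top, LinearMap.range_eq_top]
  exact I.mkQ_surjective

theorem mkQ_one_mem_A1qdeg_zero : I.mkQ 1 ∈ A1qdeg I 0 :=
  ⟨1, Submodule.subset_span ⟨[], rfl, rfl⟩, rfl⟩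

theorem A1gen_mul_mem_A1deg (i : Fin 2) {n : ℕ} {x : A1} (hx : x ∈ A1deg n) :
    A1gen i * x ∈ A1deg (n + (i + 1)) := by
  refine Submodule.span_le (p := (A1deg _).comap (LinearMap.mulLeft (ZMod 2) (A1gen i))).2 ?_ hx
  rintro _ ⟨l, rfl, rfl⟩
  exact Submodule.subset_span ⟨i :: l, A1wt_cons i l, (A1word_cons i l).symm⟩

theorem A1gen_smul_mem_A1qdeg (i : Fin 2) {n : ℕ} {q : A1 ⧸ I} (hq : q ∈ A1qdeg I n) :
    A1gen i • q ∈ A1qdeg I (n + (i + 1)) := by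
  obtain ⟨x, hx, rfl⟩ := hq
  exact ⟨A1gen i * x, A1gen_mul_mem_A1deg i hx, rfl⟩

theorem Sq1_smul_mem_A1qdeg {n : ℕ} {q : A1 ⧸ I} (hq : q ∈ A1qdeg I n) :
    Sq1 • q ∈ A1qdeg I (n + 1) :=
  A1gen_smul_mem_A1qdeg 0 hq

theorem Sq2_smul_mem_A1qdeg {n : ℕ} {q : A1 ⧸ I} (hq : q ∈ A1qdeg I n) :
    Sq2 • q ∈ A1qdeg I (n + 2) :=
  A1gen_smul_mem_A1qdeg 1 hq

variable {e : ℕ → A1 ⧸ I}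

theorem mkQ_A1word_mem_span_singleton (h_zero : e 0 = I.mkQ 1)
    (h_smul : ∀ (i : Fin 2) n, A1gen i • e n ∈ Submodule.span (ZMod 2) {e (n + (i + 1))})
    (l : List (Fin 2)) : I.mkQ (A1word l) ∈ Submodule.span (ZMod 2) {e (A1wt l)} := by
  induction l with
  | nil => exact h_zero ▸ Submodule.mem_span_singleton_self _
  | cons i l ih =>
    obtain ⟨c, hc⟩ := Submodule.mem_span_singleton.1 ih
    have h_word : I.mkQ (A1word (i :: l)) = c • A1gen i • e (A1wt l) := by
      rw [A1word_cons, ← smul_eq_mul, map_smul, ← hc, smul_comm]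
    rw [h_word, A1wt_cons]
    exact Submodule.smul_mem _ c (h_smul i _)

theorem A1qdeg_eq_span_singleton (h_zero : e 0 = I.mkQ 1)
    (h_smul : ∀ (i : Fin 2) n, A1gen i • e n ∈ Submodule.span (ZMod 2) {e (n + (i + 1))})
    (h_mem : ∀ n, e n ∈ A1qdeg I n) (n : ℕ) :
    A1qdeg I n = Submodule.span (ZMod 2) {e n} := by
  refine le_antisymm ?_ ((Submodule.span_singleton_le_iff_mem _ _).2 (h_mem n))
  rw [A1qdeg, A1deg, Submodule.map_span_le]
  rintro _ ⟨l, rfl, rfl⟩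
  exact mkQ_A1word_mem_span_singleton h_zero h_smul l

end Degree

section JokerVec

variable {M : Type*} [AddCommMonoid M] [Module A1 M]

/-- The basis elements of A(1)/(Sq³) in terms of a generator `g`, indexed by their degree and
extended by zero to the degrees `n ≥ 5`. -/
def jokerVec (g : M) : ℕ → M
  | 0 => g
  | 1 => Sq1 • g
  | 2 => Sq2 • g
  | 3 => Sq2 • Sq1 • g
  | 4 => Sq1 • Sq2 • Sq1 • g
  | _ => 0

theorem Sq1_smul_Sq1_smul (x : M) : Sq1 • Sq1 • x = 0 := by
  rw [smul_smul, Sq1_mul_Sq1, zero_smul]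

theorem Sq2_smul_Sq2_smul (x : M) : Sq2 • Sq2 • x = Sq1 • Sq2 • Sq1 • x := by
  simp only [smul_smul, Sq2_mul_Sq2, mul_assoc]

theorem Sq2_smul_Sq1_smul_Sq2_smul_Sq1_smul (x : M) :
    Sq2 • Sq1 • Sq2 • Sq1 • x = Sq1 • Sq2 • Sq1 • Sq2 • x := by
  simpa only [smul_smul, mul_assoc] using congrArg (· • x) Sq2_mul_Sq1_mul_Sq2_mul_Sq1

variable {g : M}

theorem Sq1_smul_jokerVec (hg : Sq1 • Sq2 • g = 0) (n : ℕ) :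
    Sq1 • jokerVec g n = if n = 0 ∨ n = 3 then jokerVec g (n + 1) else 0 :=
  match n with
  | 0 | 3 => rfl
  | 1 | 4 => Sq1_smul_Sq1_smul _
  | 2 => hg
  | _ + 5 => by simp [jokerVec]

theorem Sq2_smul_jokerVec (hg : Sq1 • Sq2 • g = 0) (n : ℕ) :
    Sq2 • jokerVec g n = jokerVec g (n + 2) :=
  match n with
  | 0 | 1 => rfl
  | 2 => Sq2_smul_Sq2_smul g
  | 3 => by simp only [jokerVec, Sq2_smul_Sq2_smul, Sq1_smul_Sq1_smul, smul_zero]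
  | 4 => by simp only [jokerVec, Sq2_smul_Sq1_smul_Sq2_smul_Sq1_smul, hg, smul_zero]
  | _ + 5 => smul_zero _

theorem A1gen_smul_jokerVec_mem_span [Module (ZMod 2) M] (hg : Sq1 • Sq2 • g = 0) (i : Fin 2)
    (n : ℕ) : A1gen i • jokerVec g n ∈ Submodule.span (ZMod 2) {jokerVec g (n + (i + 1))} := by
  match i with
  | 0 =>
    change Sq1 • jokerVec g n ∈ Submodule.span (ZMod 2) {jokerVec g (n + 1)}
    rw [Sq1_smul_jokerVec hg]
    split_ifs
    · exact Submodule.mem_span_singleton_self _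
    · exact Submodule.zero_mem _
  | 1 => exact Sq2_smul_jokerVec hg n ▸ Submodule.mem_span_singleton_self _

theorem jokerVec_mkQ_one_mem_A1qdeg (I : Submodule A1 A1) (n : ℕ) :
    jokerVec (I.mkQ 1) n ∈ A1qdeg I n :=
  have h_one := mkQ_one_mem_A1qdeg_zero (I := I)
  match n with
  | 0 => h_one
  | 1 => Sq1_smul_mem_A1qdeg h_one
  | 2 => Sq2_smul_mem_A1qdeg h_one
  | 3 => Sq2_smul_mem_A1qdeg (Sq1_smul_mem_A1qdeg h_one)
  | 4 => Sq1_smul_mem_A1qdeg (Sq2_smul_mem_A1qdeg (Sq1_smul_mem_A1qdeg h_one))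
  | _ + 5 => Submodule.zero_mem _

end JokerVec

/-- The cyclic module A(1)/(Sq³), known as the Joker. -/
abbrev Joker : Type := A1 ⧸ Submodule.span A1 {Sq3}

namespace Joker

/-- The basis elements of A(1)/(Sq³), indexed by their degree and extended by zero. -/
def basisVec : ℕ → Joker :=
  jokerVec (Submodule.mkQ _ 1)

theorem basisVec_eq_zero {n : ℕ} (hn : 5 ≤ n) : basisVec n = 0 := by
  obtain ⟨m, rfl⟩ := Nat.exists_eq_add_of_le' hn
  rfl

/-- The action of Sq¹ on A(1)/(Sq³) in coordinates. -/
def sq1End : Module.End (ZMod 2) (Fin 5 → ZMod 2) where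
  toFun v := ![0, v 0, 0, 0, v 3]
  map_add' v w := by simp
  map_smul' c v := by simp

/-- The action of Sq² on A(1)/(Sq³) in coordinates. -/
def sq2End : Module.End (ZMod 2) (Fin 5 → ZMod 2) where
  toFun v := ![0, 0, v 0, v 1, v 2]
  map_add' v w := by simp
  map_smul' c v := by simp

/-- The representation of A(1) on `F₂⁵` that is the coordinate form of A(1)/(Sq³). -/
def rep : A1 →ₐ[ZMod 2] Module.End (ZMod 2) (Fin 5 → ZMod 2) :=
  A1.lift sq1End sq2End (LinearMap.ext fun _ => by simp [sq1End])
    (LinearMap.ext fun _ => by simp [sq1End, sq2End])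
    (LinearMap.ext fun _ => by simp [sq1End, sq2End])

theorem rep_Sq1_apply (v : Fin 5 → ZMod 2) : rep Sq1 v = ![0, v 0, 0, 0, v 3] := by
  simp [rep, sq1End]

theorem rep_Sq2_apply (v : Fin 5 → ZMod 2) : rep Sq2 v = ![0, 0, v 0, v 1, v 2] := by
  simp [rep, sq2End]

theorem rep_Sq3_single_zero : rep Sq3 (Pi.single 0 1) = 0 := by
  simp [Sq3, rep_Sq1_apply, rep_Sq2_apply]

/-- The coordinates of an element of A(1)/(Sq³) with respect to `Joker.basisVec`. -/
def coord : Joker →ₗ[ZMod 2] Fin 5 → ZMod 2 :=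
  cyclicLift rep rep_Sq3_single_zero

theorem coord_basisVec (i : Fin 5) : coord (basisVec i) = Pi.single i 1 := by
  ext j
  fin_cases i <;> fin_cases j <;>
    simp [coord, basisVec, jokerVec, rep_Sq1_apply, rep_Sq2_apply]

theorem linearIndependent_basisVec : LinearIndependent (ZMod 2) fun i : Fin 5 => basisVec i := by
  refine LinearIndependent.of_comp coord ?_
  simpa only [Function.comp_def, coord_basisVec] using
    Pi.linearIndependent_single_one (Fin 5) (ZMod 2)

theorem Sq1_smul_Sq2_smul_mkQ_one : Sq1 • Sq2 • (Submodule.mkQ _ 1 : Joker) = 0 := by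
  have h_mem : Sq3 ∈ Submodule.span A1 {Sq3} := Submodule.mem_span_singleton_self Sq3
  rw [smul_smul, ← map_smul, smul_eq_mul, mul_one]
  exact (Submodule.Quotient.mk_eq_zero _).2 h_mem

theorem A1qdeg_eq_span_basisVec (n : ℕ) :
    A1qdeg (Submodule.span A1 {Sq3}) n = Submodule.span (ZMod 2) {basisVec n} :=
  A1qdeg_eq_span_singleton rfl
    (A1gen_smul_jokerVec_mem_span Sq1_smul_Sq2_smul_mkQ_one)
    (jokerVec_mkQ_one_mem_A1qdeg _) n

theorem span_range_basisVec :
    Submodule.span (ZMod 2) (Set.range fun i : Fin 5 => basisVec i) = ⊤ := by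
  rw [eq_top_iff, ← iSup_A1qdeg, iSup_le_iff]
  intro n
  rw [A1qdeg_eq_span_basisVec, Submodule.span_singleton_le_iff_mem]
  rcases lt_or_ge n 5 with hn | hn
  · exact Submodule.subset_span ⟨⟨n, hn⟩, rfl⟩
  · exact basisVec_eq_zero hn ▸ Submodule.zero_mem _

/-- The F₂-basis of A(1)/(Sq³) formed by the elements `Joker.basisVec i` with `i ≤ 4`. -/
def basis : Module.Basis (Fin 5) (ZMod 2) Joker :=
  Module.Basis.mk linearIndependent_basisVec span_range_basisVec.ge

end Joker

/-- A(1)/(Sq³) is 5-dimensional over F₂, with one basis element in each of the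
degrees 0, 1, 2, 3, 4. -/
theorem A1_mod_sq3 :
    Module.finrank (ZMod 2) (A1 ⧸ (Submodule.span A1 {Sq3})) = 5 ∧
    ∀ n : ℕ, Module.finrank (ZMod 2) (A1qdeg (Submodule.span A1 {Sq3}) n) =
      if n ≤ 4 then 1 else 0 := by
  refine ⟨Module.finrank_eq_card_basis Joker.basis, fun n => ?_⟩
  rw [Joker.A1qdeg_eq_span_basisVec]
  split_ifs with hn
  · have h_ne : Joker.basisVec n ≠ 0 :=
      Joker.linearIndependent_basisVec.ne_zero (⟨n, by lia⟩ : Fin 5)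
    exact finrank_span_singleton h_ne
  · rw [Joker.basisVec_eq_zero (by lia), Submodule.span_zero_singleton, finrank_bot]

end
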